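/- Fix n ≥ 6. Let G = A_{n−1} be the anticycle on [n−1] and let F be the star on [n] with edges {i, n} for 1 ≤ i ≤ n−3. Then the product ideal I_G · I_F^2 has linear quotients via the ordering of its minimal monomial generators given by decreasing lexicographic order induced by x_n > x_{n−1} > … > x_1. -/

import Mathlib

open MvPolynomial

noncomputable section

/-- The edge ideal of a finite simple graph on vertex set `Fin n`
(vertex with index `v` corresponds to the vertex `v+1` of `[n]`). -/
def edgeIdeal (K : Type*) [Field K] {n : ℕ} (G : SimpleGraph (Fin n)) :
    Ideal (MvPolynomial (Fin n) K) :=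
  Ideal.span {p | ∃ i j : Fin n, G.Adj i j ∧ p = X i * X j}

/-- `d` is the exponent vector of a minimal monomial generator of `I`. -/
def IsMinGen {K : Type*} [Field K] {n : ℕ} (I : Ideal (MvPolynomial (Fin n) K))
    (d : Fin n →₀ ℕ) : Prop :=
  monomial d (1 : K) ∈ I ∧
    ∀ e : Fin n →₀ ℕ, e ≤ d → e ≠ d → monomial e (1 : K) ∉ I

/-- A list of exponent vectors `L = [d_1, …, d_r]` is a linear quotient ordering if
for every `i ≥ 2` the colon ideal `(x^{d_1}, …, x^{d_{i-1}}) : x^{d_i}` is generated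
by a subset of the variables. -/
def IsLinQuotOrder (K : Type*) [Field K] {n : ℕ} (L : List (Fin n →₀ ℕ)) : Prop :=
  ∀ i : Fin L.length, 0 < i.val →
    ∃ V : Set (Fin n),
      Submodule.colon
        (Ideal.span {m : MvPolynomial (Fin n) K |
          ∃ k : Fin L.length, k.val < i.val ∧ m = monomial (L.get k) 1})
        (Ideal.span {monomial (L.get i) (1 : K)}) =
      Ideal.span ((fun v : Fin n => (X v : MvPolynomial (Fin n) K)) '' V)

/-- A monomial ideal has linear quotients if it is principal or admits a
linear quotient ordering of its minimal monomial generators. -/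
def HasLinearQuotients {K : Type*} [Field K] {n : ℕ}
    (I : Ideal (MvPolynomial (Fin n) K)) : Prop :=
  (∃ p, I = Ideal.span {p}) ∨
    ∃ L : List (Fin n →₀ ℕ), L.Nodup ∧ (∀ d, d ∈ L ↔ IsMinGen I d) ∧ IsLinQuotOrder K L

/-- `lexLt d e` : the monomial `x^d` is lexicographically smaller than `x^e`
for the lexicographic order induced by `x_n > x_{n-1} > … > x_1`. -/
def lexLt {n : ℕ} (d e : Fin n →₀ ℕ) : Prop :=
  ∃ k : Fin n, d k < e k ∧ ∀ m : Fin n, k < m → d m = e m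

/-- `L` lists the minimal monomial generators of `I` in decreasing lexicographic order. -/
def LexDecMinGenOrder {K : Type*} [Field K] {n : ℕ} (I : Ideal (MvPolynomial (Fin n) K))
    (L : List (Fin n →₀ ℕ)) : Prop :=
  List.Pairwise (fun d e => lexLt e d) L ∧ ∀ d, d ∈ L ↔ IsMinGen I d

/-- The anticycle on `[m]` : `{i,j}` is an edge iff `i ≠ j` and `i - j ≢ ±1 (mod m)`. -/
def anticycle (m : ℕ) : SimpleGraph (Fin m) where
  Adj i j := i ≠ j ∧ (i.val + 1) % m ≠ j.val ∧ (j.val + 1) % m ≠ i.val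
  symm := ⟨fun i j h => ⟨h.1.symm, h.2.2, h.2.1⟩⟩
  loopless := ⟨fun i h => h.1 rfl⟩

/-- The anticycle on `[m]` regarded as a graph on the vertex set `[n]`. -/
def anticycleIn (n m : ℕ) : SimpleGraph (Fin n) where
  Adj i j := i ≠ j ∧ i.val < m ∧ j.val < m ∧ (i.val + 1) % m ≠ j.val ∧ (j.val + 1) % m ≠ i.val
  symm := ⟨fun i j h => ⟨h.1.symm, h.2.2.1, h.2.1, h.2.2.2.2, h.2.2.2.1⟩⟩
  loopless := ⟨fun i h => h.1 rfl⟩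

/-- The star on `[n]` with edges `{i, n}` for `1 ≤ i ≤ n - 3`
(in the `0`-indexed picture: edges `{i, n-1}` for `i ≤ n - 4`). -/
def starF (n : ℕ) : SimpleGraph (Fin n) :=
  SimpleGraph.fromRel (fun i j => i.val + 4 ≤ n ∧ j.val = n - 1)

/-- `AgreeOrder n s i j t` : the degree-`s` monomials with ascending (0-indexed)
index sequences `i` and `j` agree in order `t`. -/
def AgreeOrder (n s : ℕ) (i j : ℕ → Fin n) (t : ℕ) : Prop :=
  if t = 0 then j (s - 1) < i (s - 1)
  else (∀ l, s - t ≤ l → l ≤ s - 1 → i l = j l) ∧ i (s - t - 1) ≠ j (s - t - 1)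

/-!
All generators of `I_G * I_F ^ s` have degree `2 * s + 2`, so they are all minimal. Up to the factor
`x_n ^ s` they are the products of an edge of the anticycle with `s` leaves of the star; hence at
most one of the non-leaves `x_{n-2}`, `x_{n-1}` occurs, to the first power. Let `u` and `v` be
generators with `u` lexicographically smaller, and let `x_k` be the largest variable in which they
differ. Replacing a suitable smaller variable of `u` by `x_k` gives a lexicographically larger
generator `w` that divides `x_k * u`, so the colon ideals are generated by variables. The one
exception is `u = x_1 ^ (s + 1) * x_{n-2} * x_n ^ s` with `k = n - 1`. Here `v` contains a leaf
`x_j` with `1 < j`, and `u` contains `x_1` at least twice because `s ≠ 0`, so that replacing one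
`x_1` by `x_j` works instead.
-/

section Finsupp

variable {σ : Type*}

theorem eq_of_le_of_degree_eq {u v : σ →₀ ℕ} (h : u ≤ v) (hd : u.degree = v.degree) : u = v := by
  obtain ⟨r, rfl⟩ := exists_add_of_le h
  have hr : r.degree = 0 := by simpa using hd
  rw [(Finsupp.degree_eq_zero_iff r).1 hr, add_zero]

theorem isAntichain_of_degree_eq {Q : Set (σ →₀ ℕ)} {D : ℕ} (hQ : ∀ d ∈ Q, d.degree = D) :
    IsAntichain (· ≤ ·) Q :=
  fun d hd e he hne hle => hne (eq_of_le_of_degree_eq hle ((hQ d hd).trans (hQ e he).symm))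

/-- The exponent vector of the monomial obtained from `x^u` by replacing one factor `x_l` by
`x_k`; only meaningful when `x_l` divides `x^u`, since the subtraction is truncated. -/
def replaceVar (u : σ →₀ ℕ) (l k : σ) : σ →₀ ℕ :=
  u - Finsupp.single l 1 + Finsupp.single k 1

variable {u : σ →₀ ℕ} {l k x : σ}

theorem replaceVar_apply_left (hlk : l ≠ k) : replaceVar u l k l = u l - 1 := by
  simp [replaceVar, hlk]

theorem replaceVar_apply_right (hlk : l ≠ k) : replaceVar u l k k = u k + 1 := by
  simp [replaceVar, hlk.symm]

theorem replaceVar_apply_of_ne (hl : x ≠ l) (hk : x ≠ k) : replaceVar u l k x = u x := by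
  simp [replaceVar, hl, hk]

theorem replaceVar_apply_pos_of_ne (hl : x ≠ l) (hx : 0 < u x) : 0 < replaceVar u l k x := by
  simp [replaceVar, hl, hx]

theorem replaceVar_le (u : σ →₀ ℕ) (l k : σ) : replaceVar u l k ≤ u + Finsupp.single k 1 :=
  add_le_add_left tsub_le_self _

theorem degree_replaceVar (hl : 0 < u l) : (replaceVar u l k).degree = u.degree := by
  obtain ⟨r, rfl⟩ := exists_add_of_le (Finsupp.single_le_iff.2 hl : Finsupp.single l 1 ≤ u)
  simp [replaceVar, add_comm]

end Finsupp

section LexOrder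

variable {n : ℕ} {u v : Fin n →₀ ℕ}

theorem lexLt_iff_toColex_lt : lexLt u v ↔ toColex u < toColex v := by
  simp only [lexLt, Finsupp.Colex.lt_iff, and_comm]
  rfl

theorem lexLt_replaceVar {l k : Fin n} (hlk : l < k) : lexLt u (replaceVar u l k) :=
  ⟨k, by rw [replaceVar_apply_right hlk.ne]; exact Nat.lt_succ_self _,
    fun _ hx => (replaceVar_apply_of_ne (hlk.trans hx).ne' hx.ne').symm⟩

theorem exists_lt_apply_of_degree_eq (hd : u.degree = v.degree) {k : Fin n} (hk : u k < v k)
    (habove : ∀ x, k < x → u x = v x) : ∃ l < k, v l < u l := by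
  by_contra! hbelow
  have hle : u ≤ v := fun x => by
    rcases lt_trichotomy x k with h | rfl | h
    exacts [hbelow x h, hk.le, (habove x h).le]
  exact hk.ne (by rw [eq_of_le_of_degree_eq hle hd])

theorem exists_greatest_pos_lt {k l₀ : Fin n} (hl₀ : l₀ < k) (hu : 0 < u l₀) :
    ∃ l < k, 0 < u l ∧ ∀ x < k, 0 < u x → x ≤ l := by
  obtain ⟨l, ⟨hlk, hl⟩, hmax⟩ :=
    Set.exists_max_image {x | x < k ∧ 0 < u x} id (Set.toFinite _) ⟨l₀, hl₀, hu⟩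
  exact ⟨l, hlk, hl, fun x hxk hx => hmax x ⟨hxk, hx⟩⟩

theorem exists_ge_replaceVar_pos {l k x : Fin n} (hlk : l < k) (hx : 0 < u x) :
    ∃ y, x ≤ y ∧ (y = x ∨ y = k) ∧ 0 < replaceVar u l k y := by
  rcases eq_or_ne x l with rfl | hxl
  · exact ⟨k, hlk.le, .inr rfl, by rw [replaceVar_apply_right hlk.ne]; exact Nat.succ_pos _⟩
  · exact ⟨x, le_rfl, .inl rfl, replaceVar_apply_pos_of_ne hxl hx⟩

theorem exists_le_replaceVar_pos {l k x z : Fin n} (hmax : ∀ y < k, 0 < u y → y ≤ l) (hzk : z < k)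
    (hz : 0 < replaceVar u l k z) (hx : 0 < u x) : ∃ y ≤ x, 0 < replaceVar u l k y := by
  rcases eq_or_ne x l with rfl | hxl
  · rcases eq_or_ne z x with rfl | hzx
    · exact ⟨z, le_rfl, hz⟩
    · rw [replaceVar_apply_of_ne hzx hzk.ne] at hz
      exact ⟨z, hmax z hzk hz, by rwa [replaceVar_apply_of_ne hzx hzk.ne]⟩
  · exact ⟨x, le_rfl, replaceVar_apply_pos_of_ne hxl hx⟩

theorem replaceVar_eq_of_forall_lt {l k : Fin n} (hd : u.degree = v.degree) (hk : u k < v k)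
    (habove : ∀ x, k < x → u x = v x) (hlk : l < k) (hl : 0 < u l)
    (hbelow : ∀ x < k, replaceVar u l k x = 0) : replaceVar u l k = v := by
  refine eq_of_le_of_degree_eq (fun x => ?_) ((degree_replaceVar hl).trans hd)
  rcases lt_trichotomy x k with h | rfl | h
  · rw [hbelow x h]
    exact Nat.zero_le _
  · rw [replaceVar_apply_right hlk.ne]
    exact hk
  · rw [replaceVar_apply_of_ne (hlk.trans h).ne' h.ne', habove x h]

theorem exists_pairwise_lexLt {Q : Set (Fin n →₀ ℕ)} (hQ : Q.Finite) :
    ∃ L : List (Fin n →₀ ℕ), L.Pairwise (fun d e => lexLt e d) ∧ ∀ d, d ∈ L ↔ d ∈ Q := by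
  let S : Finset (Colex (Fin n →₀ ℕ)) := hQ.toFinset.map toColex.toEmbedding
  refine ⟨(S.sort (· ≥ ·)).map ofColex, ?_, fun d => by simp [S]⟩
  rw [List.pairwise_map]
  exact S.sortedGT_sort.pairwise.imp fun h => lexLt_iff_toColex_lt.2 h

theorem lt_iff_lexLt_get {L : List (Fin n →₀ ℕ)} (hL : L.Pairwise (fun d e => lexLt e d))
    {i j : Fin L.length} : i < j ↔ lexLt (L.get j) (L.get i) := by
  have hanti : StrictAnti fun i => toColex (L.get i) := fun i j hij =>
    lexLt_iff_toColex_lt.1 (List.pairwise_iff_get.1 hL i j hij)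
  rw [lexLt_iff_toColex_lt]
  exact hanti.lt_iff_gt.symm

end LexOrder

section MonomialIdeal

open scoped Pointwise

variable {σ : Type*} {R : Type*} [CommSemiring R]

theorem span_monomial_image_mul (A B : Set (σ →₀ ℕ)) :
    Ideal.span ((monomial · (1 : R)) '' A) * Ideal.span ((monomial · (1 : R)) '' B) =
      Ideal.span ((monomial · (1 : R)) '' (A + B)) := by
  rw [Ideal.span_mul_span', ← Set.image2_mul, ← Set.image2_add, Set.image2_image_left,
    Set.image2_image_right, Set.image_image2]
  simp only [monomial_mul, mul_one]

theorem monomial_mem_span_monomial_image [Nontrivial R] {Q : Set (σ →₀ ℕ)} {e : σ →₀ ℕ} :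
    monomial e (1 : R) ∈ Ideal.span ((monomial · (1 : R)) '' Q) ↔ e ∈ upperClosure Q := by
  classical
  rw [mem_ideal_span_monomial_image, support_monomial, if_neg one_ne_zero]
  simp [mem_upperClosure]

theorem span_X_image_pow (A : Set σ) (s : ℕ) :
    Ideal.span (X '' A : Set (MvPolynomial σ R)) ^ s =
      Ideal.span ((monomial · (1 : R)) '' {r | r.degree = s ∧ ↑r.support ⊆ A}) := by
  rw [Ideal.span, Submodule.span_pow, Finsupp.image_pow_eq_finsuppProd_image]
  simp only [monomial_eq, map_one, one_mul]

theorem colon_span_monomial_eq_span_X {A : Set (σ →₀ ℕ)} {u : σ →₀ ℕ}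
    (hA : ∀ v ∈ A, ∃ k, u k < v k ∧ ∃ w ∈ A, w ≤ u + Finsupp.single k 1) :
    Submodule.colon (Ideal.span ((monomial · (1 : R)) '' A)) (Ideal.span {monomial u (1 : R)}) =
      Ideal.span (X '' {k | ∃ w ∈ A, w ≤ u + Finsupp.single k 1}) := by
  apply le_antisymm
  · intro f hf
    rw [Ideal.mem_colon_span_singleton, mem_ideal_span_monomial_image] at hf
    rw [mem_ideal_span_X_image]
    intro c hc
    have hcu : c + u ∈ (f * monomial u (1 : R)).support := by
      rwa [mem_support_iff, coeff_mul_monomial, mul_one, ← mem_support_iff]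
    obtain ⟨v, hvA, hv⟩ := hf _ hcu
    obtain ⟨k, hk, hw⟩ := hA v hvA
    have hvk : v k ≤ c k + u k := hv k
    exact ⟨k, hw, by omega⟩
  · rw [Ideal.span_le]
    rintro _ ⟨k, ⟨w, hwA, hw⟩, rfl⟩
    rw [SetLike.mem_coe, Ideal.mem_colon_span_singleton, mem_ideal_span_monomial_image, X,
      monomial_mul, mul_one, add_comm]
    intro c hc
    obtain rfl := Finset.mem_singleton.1 (support_monomial_subset hc)
    exact ⟨w, hwA, hw⟩

end MonomialIdeal

section LinearQuotients

variable {K : Type*} [Field K] {n : ℕ}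

theorem isMinGen_span_monomial_iff {Q : Set (Fin n →₀ ℕ)} (hQ : IsAntichain (· ≤ ·) Q)
    {d : Fin n →₀ ℕ} : IsMinGen (Ideal.span ((monomial · (1 : K)) '' Q)) d ↔ d ∈ Q := by
  rw [← hQ.minimal_mem_upperClosure_iff_mem, minimal_iff]
  simp only [IsMinGen, monomial_mem_span_monomial_image]
  exact and_congr_right fun _ =>
    ⟨fun h e he hle => by_contra fun hne => h e hle (Ne.symm hne) he,
      fun h e hle hne he => hne (h he hle).symm⟩

theorem isLinQuotOrder_of_forall_exists {L : List (Fin n →₀ ℕ)}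
    (hL : ∀ i j : Fin L.length, j < i →
      ∃ k, L.get i k < L.get j k ∧ ∃ i' < i, L.get i' ≤ L.get i + Finsupp.single k 1) :
    IsLinQuotOrder K L := by
  intro i _
  have hset : {f : MvPolynomial (Fin n) K |
      ∃ j : Fin L.length, j.val < i.val ∧ f = monomial (L.get j) 1} =
        (monomial · (1 : K)) '' (L.get '' Set.Iio i) := by
    rw [Set.image_image]
    ext f
    exact exists_congr fun j => and_congr Iff.rfl eq_comm
  rw [hset]
  refine ⟨_, colon_span_monomial_eq_span_X ?_⟩
  rintro _ ⟨j, hj, rfl⟩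
  obtain ⟨k, hk, i', hi', hle⟩ := hL i j hj
  exact ⟨k, hk, _, ⟨i', hi', rfl⟩, hle⟩

theorem isLinQuotOrder_of_replaceVar {Q : Set (Fin n →₀ ℕ)}
    (hQ : ∀ u ∈ Q, ∀ v ∈ Q, lexLt u v → ∃ l k, l < k ∧ u k < v k ∧ replaceVar u l k ∈ Q)
    {L : List (Fin n →₀ ℕ)} (hL : L.Pairwise (fun d e => lexLt e d)) (hLQ : ∀ d, d ∈ L ↔ d ∈ Q) :
    IsLinQuotOrder K L := by
  refine isLinQuotOrder_of_forall_exists fun i j hji => ?_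
  have hmem (i : Fin L.length) : L.get i ∈ Q := (hLQ _).1 (List.get_mem _ _)
  obtain ⟨l, k, hlk, hk, hw⟩ := hQ _ (hmem i) _ (hmem j) ((lt_iff_lexLt_get hL).1 hji)
  obtain ⟨i', hi'⟩ := List.get_of_mem ((hLQ _).2 hw)
  refine ⟨k, hk, i', (lt_iff_lexLt_get hL).2 ?_, ?_⟩ <;> rw [hi']
  exacts [lexLt_replaceVar hlk, replaceVar_le _ _ _]

end LinearQuotients

section Generators

variable {m s : ℕ}

/-- The smaller of the two vertices other than the centre that are not leaves of the star on
`[n]`: the vertex `n - 2`, where `n = m + 3`. -/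
def lowerNonleaf (m : ℕ) : Fin (m + 3) := ⟨m, by omega⟩

/-- The larger of the two vertices other than the centre that are not leaves of the star on
`[n]`: the vertex `n - 1`, where `n = m + 3`. -/
def upperNonleaf (m : ℕ) : Fin (m + 3) := ⟨m + 1, by omega⟩

/-- The centre of the star on `[n]`: the vertex `n`, where `n = m + 3`. -/
def starCenter (m : ℕ) : Fin (m + 3) := ⟨m + 2, by omega⟩

theorem lowerNonleaf_lt_upperNonleaf : lowerNonleaf m < upperNonleaf m := Nat.lt_succ_self m

theorem upperNonleaf_lt_starCenter : upperNonleaf m < starCenter m := Nat.lt_succ_self (m + 1)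

theorem lowerNonleaf_lt_starCenter : lowerNonleaf m < starCenter m :=
  lowerNonleaf_lt_upperNonleaf.trans upperNonleaf_lt_starCenter

theorem lt_or_eq_nonleaf_or_eq_starCenter (x : Fin (m + 3)) :
    (x : ℕ) < m ∨ x = lowerNonleaf m ∨ x = upperNonleaf m ∨ x = starCenter m := by
  simp only [lowerNonleaf, upperNonleaf, starCenter, Fin.ext_iff]
  omega

/-- The exponent vectors of the minimal generators of `I_G * I_F ^ s`, where `n = m + 3`, `G` is
the anticycle on `[n - 1]` and `F` is the star on `[n]`. The last three conditions say that the
monomial has a factor `x_i x_j` with `{i, j}` an edge of `G` whose quotient involves no vertex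
other than leaves and the centre: either both ends are leaves, or the larger end is
`lowerNonleaf`, or it is `upperNonleaf`. The bounds on the ends exclude the edges of the cycle; in
particular `0 < i` in `edge_upper` is there because the cycle joins `upperNonleaf` to `0`. -/
structure IsGenExponent (m s : ℕ) (d : Fin (m + 3) →₀ ℕ) : Prop where
  center : d (starCenter m) = s
  degree : d.degree = 2 * s + 2
  nonleaf : d (lowerNonleaf m) + d (upperNonleaf m) ≤ 1
  edge_leaf : d (lowerNonleaf m) = 0 → d (upperNonleaf m) = 0 →
    ∃ i j : Fin (m + 3), (i : ℕ) + 2 ≤ j ∧ (j : ℕ) < m ∧ 0 < d i ∧ 0 < d j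
  edge_lower : d (lowerNonleaf m) = 1 → ∃ i : Fin (m + 3), (i : ℕ) + 1 < m ∧ 0 < d i
  edge_upper : d (upperNonleaf m) = 1 → ∃ i : Fin (m + 3), 0 < (i : ℕ) ∧ (i : ℕ) < m ∧ 0 < d i

namespace IsGenExponent

variable {u v : Fin (m + 3) →₀ ℕ} {k : Fin (m + 3)}

theorem replaceVar_of_leaf (hu : IsGenExponent m s u) {l k : Fin (m + 3)} (hlk : l < k)
    (hkm : (k : ℕ) < m) (hul : 0 < u l) (hle : ∀ x, 0 < u x → ∃ y ≤ x, 0 < replaceVar u l k y) :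
    IsGenExponent m s (replaceVar u l k) := by
  have hnonleaf {x : Fin (m + 3)} (hx : m ≤ x) : replaceVar u l k x = u x :=
    replaceVar_apply_of_ne (Fin.ne_of_val_ne (by omega)) (Fin.ne_of_val_ne (by omega))
  have hp : replaceVar u l k (lowerNonleaf m) = u (lowerNonleaf m) := hnonleaf le_rfl
  have hq : replaceVar u l k (upperNonleaf m) = u (upperNonleaf m) := hnonleaf (Nat.le_succ m)
  have hge (x : Fin (m + 3)) (hxm : (x : ℕ) < m) (hx : 0 < u x) :
      ∃ y : Fin (m + 3), x ≤ y ∧ (y : ℕ) < m ∧ 0 < replaceVar u l k y := by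
    obtain ⟨y, hxy, rfl | rfl, hwy⟩ := exists_ge_replaceVar_pos hlk hx
    exacts [⟨y, hxy, hxm, hwy⟩, ⟨y, hxy, hkm, hwy⟩]
  refine ⟨by rw [hnonleaf (Nat.le_add_right m 2), hu.center],
    (degree_replaceVar hul).trans hu.degree, by rw [hp, hq]; exact hu.nonleaf, ?_, ?_, ?_⟩
  · rw [hp, hq]
    intro hp0 hq0
    obtain ⟨i, j, hij, hj, hui, huj⟩ := hu.edge_leaf hp0 hq0
    obtain ⟨i', hi', hwi'⟩ := hle i hui
    obtain ⟨j', hj', hj'm, hwj'⟩ := hge j hj huj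
    exact ⟨i', j', by omega, hj'm, hwi', hwj'⟩
  · rw [hp]
    intro hp1
    obtain ⟨i, hi, hui⟩ := hu.edge_lower hp1
    obtain ⟨i', hi', hwi'⟩ := hle i hui
    exact ⟨i', by omega, hwi'⟩
  · rw [hq]
    intro hq1
    obtain ⟨i, hi, him, hui⟩ := hu.edge_upper hq1
    obtain ⟨i', hi', hi'm, hwi'⟩ := hge i him hui
    exact ⟨i', by omega, hi'm, hwi'⟩

theorem exists_replaceVar_of_leaf (hu : IsGenExponent m s u) (hv : IsGenExponent m s v)
    (hk : u k < v k) (habove : ∀ x, k < x → u x = v x) (hkm : (k : ℕ) < m) :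
    ∃ l < k, IsGenExponent m s (replaceVar u l k) := by
  have hd : u.degree = v.degree := hu.degree.trans hv.degree.symm
  obtain ⟨l₀, hl₀k, hl₀⟩ := exists_lt_apply_of_degree_eq hd hk habove
  -- Replacing the largest variable of `u` below `x_k` raises the lowest leaf of `u` only when
  -- nothing remains below `x_k`, and then the result is `v`.
  obtain ⟨l, hlk, hl, hmax⟩ := exists_greatest_pos_lt hl₀k (Nat.zero_lt_of_lt hl₀)
  refine ⟨l, hlk, ?_⟩
  by_cases hz : ∃ z < k, 0 < replaceVar u l k z
  · obtain ⟨z, hzk, hz⟩ := hz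
    exact hu.replaceVar_of_leaf hlk hkm hl fun x hx => exists_le_replaceVar_pos hmax hzk hz hx
  · push Not at hz
    rwa [replaceVar_eq_of_forall_lt hd hk habove hlk hl fun x hx => Nat.le_zero.1 (hz x hx)]

theorem exists_replaceVar_lowerNonleaf (hu : IsGenExponent m s u)
    (hp : u (lowerNonleaf m) = 0) (hq : u (upperNonleaf m) = 0) :
    ∃ l < lowerNonleaf m, IsGenExponent m s (replaceVar u l (lowerNonleaf m)) := by
  obtain ⟨i, j, hij, hj, hui, huj⟩ := hu.edge_leaf hp hq
  have hjp : j < lowerNonleaf m := hj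
  have hjq : j < upperNonleaf m := hjp.trans lowerNonleaf_lt_upperNonleaf
  have hwp : replaceVar u j (lowerNonleaf m) (lowerNonleaf m) = 1 := by
    rw [replaceVar_apply_right hjp.ne, hp]
  have hwq : replaceVar u j (lowerNonleaf m) (upperNonleaf m) = 0 := by
    rw [replaceVar_apply_of_ne hjq.ne' lowerNonleaf_lt_upperNonleaf.ne', hq]
  refine ⟨j, hjp, ?_, (degree_replaceVar huj).trans hu.degree, by omega, by omega, fun _ => ?_,
    by omega⟩
  · rw [replaceVar_apply_of_ne (hjq.trans upperNonleaf_lt_starCenter).ne'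
      lowerNonleaf_lt_starCenter.ne', hu.center]
  · exact ⟨i, by omega, replaceVar_apply_pos_of_ne (Fin.ne_of_val_ne (by omega)) hui⟩

theorem replaceVar_upperNonleaf (hu : IsGenExponent m s u) {l i : Fin (m + 3)}
    (hl : l < upperNonleaf m) (hul : 0 < u l)
    (hp : replaceVar u l (upperNonleaf m) (lowerNonleaf m) = 0)
    (hq : u (upperNonleaf m) = 0) (hi : 0 < (i : ℕ)) (him : (i : ℕ) < m) (hui : 0 < u i)
    (hil : i ≠ l) : IsGenExponent m s (replaceVar u l (upperNonleaf m)) := by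
  have hwq : replaceVar u l (upperNonleaf m) (upperNonleaf m) = 1 := by
    rw [replaceVar_apply_right hl.ne, hq]
  refine ⟨?_, (degree_replaceVar hul).trans hu.degree, by omega, by omega, by omega,
    fun _ => ⟨i, hi, him, replaceVar_apply_pos_of_ne hil hui⟩⟩
  rw [replaceVar_apply_of_ne (hl.trans upperNonleaf_lt_starCenter).ne'
    upperNonleaf_lt_starCenter.ne', hu.center]

theorem one_lt_apply_of_forall_leaf_eq_zero (hs : s ≠ 0) (hu : IsGenExponent m s u)
    {i : Fin (m + 3)} (hleaf : ∀ x : Fin (m + 3), (x : ℕ) < m → x ≠ i → u x = 0) : 1 < u i := by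
  have hle : u ≤ Finsupp.single i (u i) + Finsupp.single (lowerNonleaf m) (u (lowerNonleaf m)) +
      Finsupp.single (upperNonleaf m) (u (upperNonleaf m)) + Finsupp.single (starCenter m) s := by
    intro x
    rcases eq_or_ne x i with rfl | hxi
    · simp only [Finsupp.add_apply, Finsupp.single_eq_same]
      omega
    rcases lt_or_eq_nonleaf_or_eq_starCenter x with h | rfl | rfl | rfl
    · simp [hleaf x h hxi]
    all_goals
      simp only [Finsupp.add_apply, Finsupp.single_eq_same, hu.center]
      omega
  have hdeg := Finsupp.degree_mono hle
  simp only [map_add, Finsupp.degree_single, hu.degree] at hdeg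
  have := hu.nonleaf
  omega

theorem exists_replaceVar_of_unique_leaf (hs : s ≠ 0) (hu : IsGenExponent m s u)
    (hleaf : ∀ x : Fin (m + 3), 0 < (x : ℕ) → (x : ℕ) < m → u x = 0)
    (hk : 0 < (k : ℕ)) (hkm : (k : ℕ) < m) :
    ∃ l < k, IsGenExponent m s (replaceVar u l k) := by
  have hl : 1 < u 0 := hu.one_lt_apply_of_forall_leaf_eq_zero hs fun x hxm hx =>
    hleaf x (Fin.pos_iff_ne_zero.2 hx) hxm
  have hlk : 0 < k := hk
  have hw0 : 0 < replaceVar u 0 k 0 := by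
    rw [replaceVar_apply_left hlk.ne]
    omega
  exact ⟨0, hlk, hu.replaceVar_of_leaf hlk hkm (by omega) fun x _ => ⟨0, Fin.zero_le x, hw0⟩⟩

theorem exists_replaceVar_upperNonleaf (hs : s ≠ 0) (hu : IsGenExponent m s u)
    (hv : IsGenExponent m s v) (huq : u (upperNonleaf m) = 0) (hvq : v (upperNonleaf m) = 1) :
    ∃ l k, l < k ∧ u k < v k ∧ IsGenExponent m s (replaceVar u l k) := by
  have huvq : u (upperNonleaf m) < v (upperNonleaf m) := by omega
  have hpq : lowerNonleaf m < upperNonleaf m := lowerNonleaf_lt_upperNonleaf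
  by_cases hp : u (lowerNonleaf m) = 0
  · obtain ⟨i, j, hij, hj, hui, huj⟩ := hu.edge_leaf hp huq
    have him : i < lowerNonleaf m := Nat.lt_trans (show i < j by omega) hj
    have hwp : replaceVar u i (upperNonleaf m) (lowerNonleaf m) = 0 := by
      rw [replaceVar_apply_of_ne him.ne' hpq.ne, hp]
    exact ⟨i, _, him.trans hpq, huvq, hu.replaceVar_upperNonleaf (him.trans hpq) hui hwp huq
      (by omega) hj huj (Fin.ne_of_val_ne (by omega))⟩
  have hp1 : u (lowerNonleaf m) = 1 := by
    have := hu.nonleaf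
    omega
  by_cases hex : ∃ i : Fin (m + 3), 0 < (i : ℕ) ∧ (i : ℕ) < m ∧ 0 < u i
  · obtain ⟨i, hi, him, hui⟩ := hex
    have hwp : replaceVar u (lowerNonleaf m) (upperNonleaf m) (lowerNonleaf m) = 0 := by
      rw [replaceVar_apply_left hpq.ne, hp1]
    exact ⟨_, _, hpq, huvq, hu.replaceVar_upperNonleaf hpq (by omega) hwp huq hi him hui
      (Fin.ne_of_val_ne him.ne)⟩
  · push Not at hex
    have hleaf (x : Fin (m + 3)) (hx : 0 < (x : ℕ)) (hxm : (x : ℕ) < m) : u x = 0 :=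
      Nat.le_zero.1 (hex x hx hxm)
    obtain ⟨j, hj, hjm, hvj⟩ := hv.edge_upper hvq
    obtain ⟨l, hlj, hw⟩ := hu.exists_replaceVar_of_unique_leaf hs hleaf hj hjm
    exact ⟨l, j, hlj, by rwa [hleaf j hj hjm], hw⟩

theorem exists_replaceVar (hs : s ≠ 0) (hu : IsGenExponent m s u) (hv : IsGenExponent m s v)
    (huv : lexLt u v) : ∃ l k, l < k ∧ u k < v k ∧ IsGenExponent m s (replaceVar u l k) := by
  obtain ⟨k, hk, habove⟩ := huv
  have hvnonleaf := hv.nonleaf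
  rcases lt_or_eq_nonleaf_or_eq_starCenter k with hkm | rfl | rfl | rfl
  · obtain ⟨l, hlk, hw⟩ := hu.exists_replaceVar_of_leaf hv hk habove hkm
    exact ⟨l, k, hlk, hk, hw⟩
  · have hq := habove _ lowerNonleaf_lt_upperNonleaf
    obtain ⟨l, hlk, hw⟩ := hu.exists_replaceVar_lowerNonleaf (by omega) (by omega)
    exact ⟨l, _, hlk, hk, hw⟩
  · exact hu.exists_replaceVar_upperNonleaf hs hv (by omega) (by omega)
  · exact absurd (hu.center.trans hv.center.symm) hk.ne

end IsGenExponent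

end Generators

section EdgeIdeals

open scoped Pointwise

/-- The exponent vectors of the generators `x_i x_j` of the edge ideal of `G`. -/
def edgeExponents {n : ℕ} (G : SimpleGraph (Fin n)) : Set (Fin n →₀ ℕ) :=
  {d | ∃ i j, G.Adj i j ∧ Finsupp.single i 1 + Finsupp.single j 1 = d}

theorem edgeIdeal_eq_span_monomial (K : Type*) [Field K] {n : ℕ} (G : SimpleGraph (Fin n)) :
    edgeIdeal K G = Ideal.span ((monomial · (1 : K)) '' edgeExponents G) := by
  rw [edgeIdeal]
  congr 1
  ext f
  constructor
  · rintro ⟨i, j, hij, rfl⟩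
    exact ⟨_, ⟨i, j, hij, rfl⟩, by simp only [X, monomial_mul, mul_one]⟩
  · rintro ⟨_, ⟨i, j, hij, rfl⟩, rfl⟩
    exact ⟨i, j, hij, by simp only [X, monomial_mul, mul_one]⟩

theorem starF_adj_iff {m : ℕ} {i j : Fin (m + 3)} : (starF (m + 3)).Adj i j ↔
    ((i : ℕ) < m ∧ j = starCenter m) ∨ ((j : ℕ) < m ∧ i = starCenter m) := by
  simp only [starF, SimpleGraph.fromRel_adj, starCenter, Fin.ext_iff, ne_eq]
  omega

theorem edgeIdeal_starF (K : Type*) [Field K] (m : ℕ) : edgeIdeal K (starF (m + 3)) =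
    Ideal.span {X (starCenter m)} * Ideal.span (X '' {a : Fin (m + 3) | (a : ℕ) < m}) := by
  rw [edgeIdeal, Ideal.span_mul_span', Set.singleton_mul, Set.image_image]
  congr 1
  ext f
  simp only [starF_adj_iff]
  constructor
  · rintro ⟨i, j, ⟨hi, rfl⟩ | ⟨hj, rfl⟩, rfl⟩
    exacts [⟨i, hi, mul_comm _ _⟩, ⟨j, hj, rfl⟩]
  · rintro ⟨a, ha, rfl⟩
    exact ⟨_, a, .inr ⟨ha, rfl⟩, rfl⟩

theorem edgeIdeal_starF_pow (K : Type*) [Field K] (m s : ℕ) : edgeIdeal K (starF (m + 3)) ^ s =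
    Ideal.span ((monomial · (1 : K)) '' ({Finsupp.single (starCenter m) s} +
      {r | r.degree = s ∧ ↑r.support ⊆ {a : Fin (m + 3) | (a : ℕ) < m}})) := by
  rw [edgeIdeal_starF, mul_pow, Ideal.span_singleton_pow, X_pow_eq_monomial, span_X_image_pow,
    ← Set.image_singleton (f := (monomial · (1 : K))), span_monomial_image_mul]

theorem anticycleIn_adj_iff_of_lt {n m : ℕ} {i j : Fin n} (hij : i < j) :
    (anticycleIn n m).Adj i j ↔
      (i : ℕ) + 2 ≤ j ∧ (j : ℕ) < m ∧ ((i : ℕ) = 0 → (j : ℕ) + 1 < m) := by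
  simp only [anticycleIn, ne_eq, hij.ne, not_false_eq_true, true_and]
  by_cases hjm : (j : ℕ) < m
  · have hi : ((i : ℕ) + 1) % m = i + 1 := Nat.mod_eq_of_lt (by omega)
    rcases (Nat.succ_le_of_lt hjm).eq_or_lt with hj | hj
    · rw [hi, show (j : ℕ) + 1 = m from hj, Nat.mod_self]
      omega
    · rw [hi, Nat.mod_eq_of_lt hj]
      omega
  · omega

namespace IsGenExponent

variable {m s : ℕ} {d : Fin (m + 3) →₀ ℕ}

theorem exists_edge (hd : IsGenExponent m s d) : ∃ i j : Fin (m + 3), i < j ∧ j < starCenter m ∧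
    (anticycleIn (m + 3) (m + 2)).Adj i j ∧ 0 < d i ∧ 0 < d j ∧
    d (lowerNonleaf m) = Finsupp.single j 1 (lowerNonleaf m) ∧
    d (upperNonleaf m) = Finsupp.single j 1 (upperNonleaf m) := by
  have hnonleaf := hd.nonleaf
  have hpq : lowerNonleaf m ≠ upperNonleaf m := lowerNonleaf_lt_upperNonleaf.ne
  by_cases hp : d (lowerNonleaf m) = 0
  · by_cases hq : d (upperNonleaf m) = 0
    · obtain ⟨i, j, hij, hj, hdi, hdj⟩ := hd.edge_leaf hp hq
      have hlt : i < j := by omega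
      have hjp : j < lowerNonleaf m := hj
      have hjq : j < upperNonleaf m := hjp.trans lowerNonleaf_lt_upperNonleaf
      refine ⟨i, j, hlt, hjq.trans upperNonleaf_lt_starCenter,
        (anticycleIn_adj_iff_of_lt hlt).2 (by omega), hdi, hdj, ?_, ?_⟩
      · rw [hp, Finsupp.single_eq_of_ne hjp.ne']
      · rw [hq, Finsupp.single_eq_of_ne hjq.ne']
    · obtain ⟨i, hi, him, hdi⟩ := hd.edge_upper (by omega)
      have hlt : i < upperNonleaf m := Nat.lt_succ_of_lt him
      refine ⟨i, _, hlt, upperNonleaf_lt_starCenter, (anticycleIn_adj_iff_of_lt hlt).2 ?_, hdi,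
        by omega, by rw [hp, Finsupp.single_eq_of_ne hpq], by rw [Finsupp.single_eq_same]; omega⟩
      simp only [upperNonleaf]
      omega
  · obtain ⟨i, him, hdi⟩ := hd.edge_lower (by omega)
    have hlt : i < lowerNonleaf m := Nat.lt_of_succ_lt him
    refine ⟨i, _, hlt, lowerNonleaf_lt_starCenter, (anticycleIn_adj_iff_of_lt hlt).2 ?_, hdi,
      by omega, by rw [Finsupp.single_eq_same]; omega,
      by rw [Finsupp.single_eq_of_ne hpq.symm]; omega⟩
    simp only [lowerNonleaf]
    omega

theorem mem_add (hd : IsGenExponent m s d) :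
    d ∈ edgeExponents (anticycleIn (m + 3) (m + 2)) + ({Finsupp.single (starCenter m) s} +
      {r | r.degree = s ∧ ↑r.support ⊆ {a : Fin (m + 3) | (a : ℕ) < m}}) := by
  obtain ⟨i, j, hij, hjt, hadj, hdi, hdj, hp, hq⟩ := hd.exists_edge
  have hle : Finsupp.single i 1 + Finsupp.single j 1 + Finsupp.single (starCenter m) s ≤ d := by
    intro x
    simp only [Finsupp.add_apply, Finsupp.single_apply]
    have := hd.center
    grind
  obtain ⟨r, hr⟩ := exists_add_of_le hle
  have hdeg := hd.degree
  simp only [hr, map_add, Finsupp.degree_single] at hdeg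
  refine ⟨_, ⟨i, j, hadj, rfl⟩, _, ⟨_, rfl, r, ⟨by omega, fun x hx => ?_⟩, rfl⟩, ?_⟩
  · have hx0 : r x ≠ 0 := Finsupp.mem_support_iff.1 hx
    have hdx := DFunLike.congr_fun hr x
    simp only [Finsupp.add_apply] at hdx
    rcases lt_or_eq_nonleaf_or_eq_starCenter x with h | rfl | rfl | rfl
    · exact h
    · omega
    · omega
    · rw [hd.center, Finsupp.single_eq_same] at hdx
      omega
  · simp only [hr, add_assoc]

theorem of_edge {i j : Fin (m + 3)} (hij : i < j) (hadj : (anticycleIn (m + 3) (m + 2)).Adj i j)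
    (hdi : 0 < d i) (hdj : 0 < d j) (hp : d (lowerNonleaf m) = Finsupp.single j 1 (lowerNonleaf m))
    (hq : d (upperNonleaf m) = Finsupp.single j 1 (upperNonleaf m)) (hc : d (starCenter m) = s)
    (hdeg : d.degree = 2 * s + 2) : IsGenExponent m s d := by
  obtain ⟨hij2, hjm, hi0⟩ := (anticycleIn_adj_iff_of_lt hij).1 hadj
  have hpq : lowerNonleaf m ≠ upperNonleaf m := lowerNonleaf_lt_upperNonleaf.ne
  rcases lt_or_eq_nonleaf_or_eq_starCenter j with hj | rfl | rfl | rfl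
  · rw [Finsupp.single_eq_of_ne (Fin.ne_of_val_ne hj.ne')] at hp
    rw [Finsupp.single_eq_of_ne (Fin.ne_of_val_ne (Nat.lt_succ_of_lt hj).ne')] at hq
    exact ⟨hc, hdeg, by omega, fun _ _ => ⟨i, j, hij2, hj, hdi, hdj⟩, by omega, by omega⟩
  · rw [Finsupp.single_eq_same] at hp
    rw [Finsupp.single_eq_of_ne hpq.symm] at hq
    exact ⟨hc, hdeg, by omega, by omega, fun _ => ⟨i, hij2, hdi⟩, by omega⟩
  · rw [Finsupp.single_eq_of_ne hpq] at hp
    rw [Finsupp.single_eq_same] at hq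
    simp only [upperNonleaf] at hij2 hi0
    exact ⟨hc, hdeg, by omega, by omega, by omega, fun _ => ⟨i, by omega, by omega, hdi⟩⟩
  · exact absurd hjm (lt_irrefl _)

theorem of_adj {i j : Fin (m + 3)} {r : Fin (m + 3) →₀ ℕ} (hij : i < j)
    (hadj : (anticycleIn (m + 3) (m + 2)).Adj i j) (hr : r.degree = s)
    (hrm : ∀ x : Fin (m + 3), m ≤ x → r x = 0) :
    IsGenExponent m s (Finsupp.single i 1 + Finsupp.single j 1 +
      (Finsupp.single (starCenter m) s + r)) := by
  obtain ⟨hij2, hjm, -⟩ := (anticycleIn_adj_iff_of_lt hij).1 hadj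
  have hrp : r (lowerNonleaf m) = 0 := hrm _ le_rfl
  have hrq : r (upperNonleaf m) = 0 := hrm _ (Nat.le_succ m)
  have hrc : r (starCenter m) = 0 := hrm _ (Nat.le_add_right m 2)
  have hip : lowerNonleaf m ≠ i := Fin.ne_of_val_ne (show m ≠ (i : ℕ) by omega)
  have hiq : upperNonleaf m ≠ i := Fin.ne_of_val_ne (show m + 1 ≠ (i : ℕ) by omega)
  have hic : starCenter m ≠ i := Fin.ne_of_val_ne (show m + 2 ≠ (i : ℕ) by omega)
  have hjc : starCenter m ≠ j := Fin.ne_of_val_ne hjm.ne'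
  refine of_edge hij hadj (by simp) (by simp) ?_ ?_ ?_ ?_
  · simp [hrp, hip, lowerNonleaf_lt_starCenter.ne]
  · simp [hrq, hiq, upperNonleaf_lt_starCenter.ne]
  · simp [hrc, hic, hjc]
  · simp only [map_add, Finsupp.degree_single, hr]
    omega

end IsGenExponent

theorem edgeIdeal_anticycleIn_mul_starF_pow (K : Type*) [Field K] (m s : ℕ) :
    edgeIdeal K (anticycleIn (m + 3) (m + 2)) * edgeIdeal K (starF (m + 3)) ^ s =
      Ideal.span ((monomial · (1 : K)) '' {d | IsGenExponent m s d}) := by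
  rw [edgeIdeal_eq_span_monomial, edgeIdeal_starF_pow, span_monomial_image_mul]
  congr 2
  refine Set.Subset.antisymm ?_ fun d hd => hd.mem_add
  rintro _ ⟨_, ⟨i, j, hadj, rfl⟩, _, ⟨_, rfl, r, ⟨hr, hrm⟩, rfl⟩, rfl⟩
  have hrm0 (x : Fin (m + 3)) (hx : m ≤ x) : r x = 0 :=
    Finsupp.notMem_support_iff.1 fun h => hx.not_gt (hrm h)
  rcases hadj.ne.lt_or_gt with hij | hji
  · exact .of_adj hij hadj hr hrm0
  · dsimp only
    rw [add_comm (Finsupp.single i 1)]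
    exact .of_adj hji hadj.symm hr hrm0

end EdgeIdeals

theorem IGIF2_lex_linear_quotients_general
    (K : Type*) [Field K] (n s : ℕ) (hn : 3 ≤ n) (hs : s ≠ 0) :
    ∃ L : List (Fin n →₀ ℕ),
      LexDecMinGenOrder (edgeIdeal K (anticycleIn n (n - 1)) * edgeIdeal K (starF n) ^ s) L ∧
      IsLinQuotOrder K L := by
  obtain ⟨m, rfl⟩ := Nat.exists_eq_add_of_le' hn
  rw [show m + 3 - 1 = m + 2 from rfl, edgeIdeal_anticycleIn_mul_starF_pow]
  have hdeg : ∀ d ∈ {d | IsGenExponent m s d}, d.degree = 2 * s + 2 := fun d hd => hd.degree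
  obtain ⟨L, hL, hmem⟩ :=
    exists_pairwise_lexLt ((Finsupp.finite_of_degree_eq (2 * s + 2)).subset hdeg)
  refine ⟨L, ⟨hL, fun d => ?_⟩, isLinQuotOrder_of_replaceVar ?_ hL hmem⟩
  · rw [hmem, isMinGen_span_monomial_iff (isAntichain_of_degree_eq hdeg)]
  · exact fun u hu v hv huv => hu.exists_replaceVar hs hv huv

/-- Lemma `lem2`: for `n ≥ 6`, `G = A_{n-1}` the anticycle on `[n-1]` and `F` the star
on `[n]` with edges `{i, n}`, `1 ≤ i ≤ n-3`, the product `I_G · I_F^2` has linear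
quotients via the ordering of its minimal generators in decreasing lexicographic order
induced by `x_n > x_{n-1} > … > x_1`. -/
theorem IGIF2_lex_linear_quotients
    (K : Type*) [Field K] (n : ℕ) (hn : 6 ≤ n) :
    ∃ L : List (Fin n →₀ ℕ),
      LexDecMinGenOrder (edgeIdeal K (anticycleIn n (n - 1)) * edgeIdeal K (starF n) ^ 2) L ∧
      IsLinQuotOrder K L :=
  IGIF2_lex_linear_quotients_general K n 2 (by omega) two_ne_zero
end
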